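/- Let n ≥ 8 and let G be a connected locally nonforesty graph of order n. Then the size of G is at least p(n), where p(n) = 2n − 1 − ⌊n/4⌋ if n ≡ 0 or 3 (mod 4), and p(n) = 2n − ⌊n/4⌋ otherwise. -/

import Mathlib

/-- A graph `G` is locally nonforesty if for every vertex `v`, the subgraph induced by
the neighborhood of `v` contains a cycle (i.e., is not acyclic). -/
def LocallyNonforesty {V : Type*} (G : SimpleGraph V) : Prop :=
  ∀ v : V, ¬ (G.induce (G.neighborSet v)).IsAcyclic

open Classical in
/-- The edges of `G` inside `U`. -/
noncomputable def edgesIn {V : Type*} (G : SimpleGraph V) (U : Finset V) : Finset (Sym2 V) :=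
  U.sym2.filter (fun s => s ∈ G.edgeSet)

/-- Number of edges inside `U`. -/
noncomputable def eIn {V : Type*} (G : SimpleGraph V) (U : Finset V) : ℕ := (edgesIn G U).card

theorem mem_edgesIn {V : Type*} (G : SimpleGraph V) (U : Finset V) (s : Sym2 V) :
    s ∈ edgesIn G U ↔ (∀ a ∈ s, a ∈ U) ∧ s ∈ G.edgeSet := by
  simp [edgesIn, Finset.mem_sym2_iff]

open Classical in
theorem eIn_super {V : Type*} (G : SimpleGraph V) (A B : Finset V) :
    eIn G A + eIn G B ≤ eIn G (A ∪ B) + eIn G (A ∩ B) := by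
  unfold eIn
  rw [← Finset.card_union_add_card_inter]
  refine Nat.add_le_add (Finset.card_le_card ?_) (Finset.card_le_card ?_)
  · intro s
    simp only [Finset.mem_union, mem_edgesIn]
    rintro (h | h)
    · exact ⟨fun a ha => Or.inl (h.1 a ha), h.2⟩
    · exact ⟨fun a ha => Or.inr (h.1 a ha), h.2⟩
  · intro s
    simp only [Finset.mem_inter, mem_edgesIn]
    rintro ⟨h, h'⟩
    exact ⟨fun a ha => ⟨h.1 a ha, h'.1 a ha⟩, h.2⟩

open Classical in
theorem eIn_insert {V : Type*} (G : SimpleGraph V) (x : V) (C : Finset V)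
    (hC : ∀ c ∈ C, G.Adj x c) : eIn G (insert x C) = eIn G C + C.card := by
  have hx : x ∉ C := fun h => (hC x h).ne rfl
  have h1 : edgesIn G (insert x C) = edgesIn G C ∪ C.image (fun c => s(x, c)) := by
    ext s
    induction s using Sym2.ind with
    | _ a b =>
      simp only [Finset.mem_union, mem_edgesIn, Finset.mem_image, Sym2.mem_iff,
        Finset.mem_insert, SimpleGraph.mem_edgeSet, Sym2.eq_iff]
      constructor
      · rintro ⟨h, hab⟩
        have ha := h a (Or.inl rfl)
        have hb := h b (Or.inr rfl)
        have := hab.ne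
        grind
      · rintro (⟨h, hab⟩ | ⟨c, hc, ⟨rfl, rfl⟩ | ⟨rfl, rfl⟩⟩)
        · exact ⟨fun a ha => Or.inr (h a ha), hab⟩
        · refine ⟨by grind, hC _ hc⟩
        · refine ⟨by grind, (hC _ hc).symm⟩
  have h2 : Disjoint (edgesIn G C) (C.image (fun c => s(x, c))) := by
    rw [Finset.disjoint_left]
    intro s hs h
    obtain ⟨c, hc, rfl⟩ := Finset.mem_image.1 h
    exact hx (((mem_edgesIn G C _).1 hs).1 x (by simp))
  unfold eIn
  rw [h1, Finset.card_union_of_disjoint h2, Finset.card_image_of_injective]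
  intro a b h
  have h' := Sym2.eq_iff.1 h
  grind

open Classical in
theorem eIn_cross {V : Type*} (G : SimpleGraph V) (U W : Finset V) (T : Finset (Sym2 V))
    (hUW : Disjoint U W)
    (hT : ∀ s ∈ T, ∃ u ∈ U, ∃ w ∈ W, G.Adj u w ∧ s = s(u, w)) :
    eIn G U + eIn G W + T.card ≤ eIn G (U ∪ W) := by
  have hd := Finset.disjoint_left.1 hUW
  have h1 : Disjoint (edgesIn G U) (edgesIn G W) := by
    rw [Finset.disjoint_left]
    intro s
    induction s using Sym2.ind with
    | _ a b =>
      intro h h'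
      exact hd (((mem_edgesIn G _ _).1 h).1 a (by simp)) (((mem_edgesIn G _ _).1 h').1 a (by simp))
  have h2 : Disjoint (edgesIn G U ∪ edgesIn G W) T := by
    rw [Finset.disjoint_left]
    intro s hs hsT
    obtain ⟨u, hu, w, hw, -, rfl⟩ := hT s hsT
    simp only [Finset.mem_union, mem_edgesIn] at hs
    rcases hs with h | h
    · exact hd (h.1 w (by simp)) hw
    · exact hd hu (h.1 u (by simp))
  unfold eIn
  rw [← Finset.card_union_of_disjoint h1, ← Finset.card_union_of_disjoint h2]
  apply Finset.card_le_card
  intro s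
  simp only [Finset.mem_union, mem_edgesIn]
  rintro ((h | h) | h)
  · exact ⟨fun a ha => Or.inl (h.1 a ha), h.2⟩
  · exact ⟨fun a ha => Or.inr (h.1 a ha), h.2⟩
  · obtain ⟨u, hu, w, hw, hadj, rfl⟩ := hT s h
    refine ⟨?_, hadj⟩
    intro a ha
    rcases Sym2.mem_iff.1 ha with rfl | rfl
    · exact Or.inl hu
    · exact Or.inr hw

theorem eIn_empty {V : Type*} (G : SimpleGraph V) : eIn G ∅ = 0 := by
  simp [eIn, edgesIn]

/-- A minimal set carrying at least as many edges as vertices (morally, a chordless cycle). -/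
def Circ {V : Type*} (G : SimpleGraph V) (C : Finset V) : Prop :=
  C.Nonempty ∧ C.card ≤ eIn G C ∧ ∀ A ⊆ C, A.Nonempty → A.card ≤ eIn G A → A = C

theorem circ_card {V : Type*} (G : SimpleGraph V) (C : Finset V) (h : Circ G C) :
    3 ≤ C.card := by
  classical
  obtain ⟨h1, h2, h3⟩ := h
  have h0 := h1.card_pos
  by_contra hlt
  have : C.card = 1 ∨ C.card = 2 := by omega
  rcases this with h | h
  · obtain ⟨a, rfl⟩ := Finset.card_eq_one.1 h
    have : eIn G {a} = 0 := by
      have := eIn_insert G a ∅ (by simp)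
      simpa [eIn_empty] using this
    omega
  · obtain ⟨a, b, hab, rfl⟩ := Finset.card_eq_two.1 h
    have hs : edgesIn G {a, b} ⊆ {s(a, b)} := by
      intro s
      induction s using Sym2.ind with
      | _ c d =>
        rw [mem_edgesIn]
        rintro ⟨h, hcd⟩
        have hc := h c (by simp)
        have hd := h d (by simp)
        have := (G.mem_edgeSet.1 hcd).ne
        simp only [Finset.mem_insert, Finset.mem_singleton] at *
        rw [Sym2.eq_iff]
        grind
    have := Finset.card_le_card hs
    simp only [Finset.card_singleton] at this
    unfold eIn at h2
    omega

theorem exists_circ {V : Type*} [Fintype V] (G : SimpleGraph V) (hloc : LocallyNonforesty G)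
    (v : V) : ∃ C, Circ G C ∧ ∀ c ∈ C, G.Adj v c := by
  classical
  have h := hloc v
  unfold SimpleGraph.IsAcyclic at h
  push Not at h
  obtain ⟨a, p, hp⟩ := h
  -- the support of the cycle
  let f : G.induce (G.neighborSet v) →g G := (SimpleGraph.Embedding.induce _).toHom
  have hf : Function.Injective f := fun x y h => Subtype.ext h
  let q := p.map f
  have hq : q.IsCycle := hp.map hf
  let S : Finset V := q.support.tail.toFinset
  have hmemS : ∀ x, x ∈ S ↔ x ∈ q.support := by
    intro x
    simp only [S, List.mem_toFinset]
    have hend := SimpleGraph.Walk.end_mem_tail_support hq.not_nil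
    constructor
    · exact List.mem_of_mem_tail
    · intro h
      rw [← SimpleGraph.Walk.cons_tail_support, List.mem_cons] at h
      rcases h with h | h
      · rw [h]; exact hend
      · exact h
  have hScard : S.card = q.length := by
    rw [List.toFinset_card_of_nodup hq.support_nodup]
    simp
  have hSe : S.card ≤ eIn G S := by
    have : q.edges.toFinset ⊆ edgesIn G S := by
      intro s hs
      rw [List.mem_toFinset] at hs
      rw [mem_edgesIn]
      refine ⟨fun x hx => (hmemS x).2 ?_, q.edges_subset_edgeSet hs⟩
      exact q.mem_support_of_mem_edges hs hx
    have h2 := Finset.card_le_card this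
    rw [List.toFinset_card_of_nodup hq.edges_nodup, SimpleGraph.Walk.length_edges] at h2
    rw [hScard]; exact h2
  have hSne : S.Nonempty := ⟨_, (hmemS _).2 q.start_mem_support⟩
  have hSv : ∀ c ∈ S, G.Adj v c := by
    intro c hc
    have := (hmemS c).1 hc
    simp only [q, SimpleGraph.Walk.support_map, List.mem_map] at this
    obtain ⟨y, -, rfl⟩ := this
    exact y.2
  let P : Finset V → Prop := fun A => A ⊆ S ∧ A.Nonempty ∧ A.card ≤ eIn G A
  obtain ⟨C, hC, hmin⟩ := exists_minimal_of_wellFoundedLT P ⟨S, subset_rfl, hSne, hSe⟩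
  refine ⟨C, ⟨hC.2.1, hC.2.2, ?_⟩, fun c hc => hSv c (hC.1 hc)⟩
  intro A hA hne hcard
  exact subset_antisymm hA (hmin ⟨hA.trans hC.1, hne, hcard⟩ hA)

/-- Admissible values. -/
def Good {V : Type*} (G : SimpleGraph V) (U : Finset V) : Prop :=
  7 * U.card ≤ 4 * eIn G U + 4 ∧ 4 * eIn G U + 4 ≠ 7 * U.card + 1 ∧
    4 * eIn G U + 4 ≠ 7 * U.card + 2

open Classical in
/-- Either `U ∪ W` is fine, or we enlarge further at a rim vertex. -/
theorem rim_step {V : Type*} [Fintype V] (G : SimpleGraph V)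
    (hloc : LocallyNonforesty G) (U C : Finset V) (x : V) (hC : Circ G C)
    (hxC : ∀ c ∈ C, G.Adj x c) (h4 : 4 ≤ C.card)
    (hno : ∀ w ∈ C, ∀ u ∈ U, ¬ G.Adj w u)
    (h7 : 7 * (U ∪ insert x C).card ≤ 4 * eIn G (U ∪ insert x C) + 4) :
    ∃ U', U ∪ insert x C ⊆ U' ∧ Good G U' := by
  obtain ⟨w, hw⟩ := hC.1
  obtain ⟨D, hD, hwD⟩ := exists_circ G hloc w
  have hD3 := circ_card G D hD
  set U1 := U ∪ insert x C with hU1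
  have hwU1 : w ∈ U1 := by simp [hU1, hw]
  have hwnD : w ∉ D := fun h => (hwD w h).ne rfl
  have hxnC : x ∉ C := fun h => (hxC x h).ne rfl
  by_cases hsub : D ⊆ U1
  · exfalso
    have hDW : D ⊆ insert x C := by
      intro d hd
      rcases Finset.mem_union.1 (hsub hd) with h | h
      · exact absurd (hwD d hd) (hno w hw d h)
      · exact h
    by_cases hxD : x ∈ D
    · set A := D.erase x with hA
      have hDA : D = insert x A := by rw [hA, Finset.insert_erase hxD]
      have hAC : A ⊆ C := by
        intro a ha
        have h1 := hDW (Finset.mem_of_mem_erase ha)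
        have h2 := Finset.ne_of_mem_erase ha
        simpa [h2] using h1
      have h1 := eIn_insert G x A (fun a ha => hxC a (hAC ha))
      have hxA : x ∉ A := by simp [hA]
      have h2 : D.card = A.card + 1 := by rw [hDA, Finset.card_insert_of_notMem hxA]
      have h3 := hD.2.1
      rw [← hDA] at h1
      have h5 : 0 < eIn G A := by omega
      obtain ⟨s, hs⟩ := Finset.card_pos.1 h5
      induction s using Sym2.ind with
      | _ a b =>
        rw [mem_edgesIn] at hs
        have ha := hs.1 a (by simp)
        have hb := hs.1 b (by simp)
        have hab : G.Adj a b := hs.2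
        have hwa := hwD a (Finset.mem_of_mem_erase ha)
        have hwb := hwD b (Finset.mem_of_mem_erase hb)
        have e0 := eIn_insert G b ∅ (by simp)
        have e1 := eIn_insert G a {b} (by simpa using hab)
        have e2 := eIn_insert G w {a, b} (by simp [hwa, hwb])
        have c1 : ({a, b} : Finset V).card = 2 := Finset.card_pair hab.ne
        have c2 : ({w, a, b} : Finset V).card = 3 := by
          rw [Finset.card_insert_of_notMem, c1]
          simp [hwa.ne, hwb.ne]
        have := hC.2.2 {w, a, b} (by
          intro y hy
          simp only [Finset.mem_insert, Finset.mem_singleton] at hy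
          rcases hy with rfl | rfl | rfl
          · exact hw
          · exact hAC ha
          · exact hAC hb) ⟨w, by simp⟩ (by
            simp at e1
            omega)
        rw [← this] at h4
        omega
    · have hDC : D ⊆ C := by
        intro d hd
        have h1 := hDW hd
        have h2 : d ≠ x := fun h => hxD (h ▸ hd)
        simpa [h2] using h1
      have := hC.2.2 D hDC hD.1 hD.2.1
      exact hwnD (this ▸ hw)
  · refine ⟨U1 ∪ insert w D, Finset.subset_union_left, ?_⟩
    have hs := eIn_super G U1 (insert w D)
    have hc := Finset.card_union_add_card_inter U1 (insert w D)
    have hi : U1 ∩ insert w D = insert w (U1 ∩ D) := by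
      ext y; simp only [Finset.mem_inter, Finset.mem_insert]
      constructor
      · rintro ⟨h, rfl | h'⟩
        · exact Or.inl rfl
        · exact Or.inr ⟨h, h'⟩
      · rintro (rfl | ⟨h, h'⟩)
        · exact ⟨hwU1, Or.inl rfl⟩
        · exact ⟨h, Or.inr h'⟩
    set A := U1 ∩ D with hA
    have hAD : A ⊆ D := Finset.inter_subset_right
    have hwA : w ∉ A := fun h => hwnD (hAD h)
    rw [hi] at hs hc
    have e1 := eIn_insert G w D hwD
    have e2 := eIn_insert G w A (fun a ha => hwD a (hAD ha))
    rw [Finset.card_insert_of_notMem hwnD, Finset.card_insert_of_notMem hwA] at hc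
    have hne : A ≠ D := fun h => hsub (by rw [← h]; exact Finset.inter_subset_left)
    have hlt := Finset.card_lt_card (Finset.ssubset_iff_subset_ne.2 ⟨hAD, hne⟩)
    have hDe := hD.2.1
    unfold Good
    by_cases hAe : A.Nonempty
    · have : ¬ A.card ≤ eIn G A := fun h => hne (hD.2.2 A hAD hAe h)
      omega
    · rw [Finset.not_nonempty_iff_eq_empty] at hAe
      have z1 : eIn G A = 0 := by rw [hAe, eIn_empty]
      have z2 : A.card = 0 := by rw [hAe, Finset.card_empty]
      omega

theorem step {V : Type*} [Fintype V] (G : SimpleGraph V) (hconn : G.Connected)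
    (hloc : LocallyNonforesty G) (U : Finset V) (hU : U = ∅ ∨ Good G U) (hne : U ≠ Finset.univ) :
    ∃ U', U ⊂ U' ∧ Good G U' := by
  classical
  have hx : ∃ x, x ∉ U ∧ (U = ∅ ∨ ∃ u ∈ U, G.Adj u x) := by
    by_cases hem : U = ∅
    · obtain ⟨x⟩ := hconn.nonempty
      exact ⟨x, by simp [hem], Or.inl hem⟩
    · obtain ⟨u, hu⟩ := Finset.nonempty_iff_ne_empty.2 hem
      obtain ⟨y, hy⟩ : ∃ y, y ∉ U := by
        by_contra h
        push Not at h
        exact hne (Finset.eq_univ_iff_forall.2 h)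
      obtain ⟨p⟩ := hconn.preconnected u y
      obtain ⟨d, -, h1, h2⟩ := p.exists_boundary_dart (U : Set V) hu hy
      exact ⟨d.snd, h2, Or.inr ⟨d.fst, h1, d.adj⟩⟩
  obtain ⟨x, hxU, hx⟩ := hx
  obtain ⟨C, hC, hxC⟩ := exists_circ G hloc x
  have hC3 := circ_card G C hC
  have hxnC : x ∉ C := fun h => (hxC x h).ne rfl
  have e1 := eIn_insert G x C hxC
  have hCe := hC.2.1
  have c1 := Finset.card_insert_of_notMem hxnC
  have hss : U ⊂ U ∪ insert x C := by
    rw [Finset.ssubset_iff_of_subset Finset.subset_union_left]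
    exact ⟨x, by simp, hxU⟩
  have hi : U ∩ insert x C = U ∩ C := by
    ext y; simp only [Finset.mem_inter, Finset.mem_insert]
    constructor
    · rintro ⟨h, rfl | h'⟩
      · exact absurd h hxU
      · exact ⟨h, h'⟩
    · rintro ⟨h, h'⟩; exact ⟨h, Or.inr h'⟩
  have hs := eIn_super G U (insert x C)
  have hc := Finset.card_union_add_card_inter U (insert x C)
  rw [hi] at hs hc
  have hAC : U ∩ C ⊆ C := Finset.inter_subset_right
  by_cases hAe : (U ∩ C).Nonempty
  · have hgU : Good G U := by
      rcases hU with rfl | h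
      · simp at hAe
      · exact h
    refine ⟨_, hss, ?_⟩
    have hpos := hAe.card_pos
    have hle := Finset.card_le_card hAC
    unfold Good at hgU ⊢
    by_cases hAeq : U ∩ C = C
    · rw [hAeq] at hs hc
      omega
    · have : ¬ (U ∩ C).card ≤ eIn G (U ∩ C) := fun h => hAeq (hC.2.2 _ hAC hAe h)
      omega
  · rw [Finset.not_nonempty_iff_eq_empty] at hAe
    have hdisj : Disjoint U (insert x C) := by
      rw [Finset.disjoint_iff_inter_eq_empty, hi, hAe]
    rw [hAe] at hs hc
    rw [eIn_empty] at hs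
    rw [Finset.card_empty] at hc
    by_cases hg : Good G (U ∪ insert x C)
    · exact ⟨_, hss, hg⟩
    · have key : 7 * (U ∪ insert x C).card ≤ 4 * eIn G (U ∪ insert x C) + 4 ∧ 4 ≤ C.card ∧
          ∀ w ∈ C, ∀ u ∈ U, ¬ G.Adj w u := by
        rcases hx with hem | ⟨u, hu, hux⟩
        · have h0 : U.card = 0 := by simp [hem]
          have h1 : eIn G U = 0 := by rw [hem, eIn_empty]
          refine ⟨by omega, ?_, by simp [hem]⟩
          by_contra h4
          have h3 : C.card = 3 := by omega
          apply hg
          unfold Good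
          omega
        · have hgU : Good G U := by
            rcases hU with rfl | h
            · simp at hu
            · exact h
          have k1 := eIn_cross G U (insert x C) {s(u, x)} hdisj (by
            intro s hs
            rw [Finset.mem_singleton] at hs
            exact ⟨u, hu, x, by simp, hux, hs⟩)
          rw [Finset.card_singleton] at k1
          unfold Good at hgU hg
          refine ⟨by omega, by omega, ?_⟩
          intro w hw y hy hwy
          have hwx : w ≠ x := fun h => hxnC (h ▸ hw)
          have hyx : y ≠ x := fun h => hxU (h ▸ hy)
          have k2 := eIn_cross G U (insert x C) {s(u, x), s(y, w)} hdisj (by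
            intro s hs
            rw [Finset.mem_insert, Finset.mem_singleton] at hs
            rcases hs with hs | hs
            · exact ⟨u, hu, x, by simp, hux, hs⟩
            · exact ⟨y, hy, w, by simp [hw], hwy.symm, hs⟩)
          rw [Finset.card_pair (by
            intro h
            rw [Sym2.eq_iff] at h
            rcases h with h | h
            · exact hwx h.2.symm
            · exact hyx h.2.symm)] at k2
          omega
      obtain ⟨U', h1, h2⟩ := rim_step G hloc U C x hC hxC key.2.1 key.2.2 key.1
      exact ⟨U', lt_of_lt_of_le hss h1, h2⟩

theorem good_univ {V : Type*} [Fintype V] (G : SimpleGraph V) (hconn : G.Connected)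
    (hloc : LocallyNonforesty G) : Good G Finset.univ := by
  have hne : (Finset.univ : Finset V) ≠ ∅ := by
    obtain ⟨x⟩ := hconn.nonempty
    exact Finset.ne_empty_of_mem (Finset.mem_univ x)
  obtain ⟨U, hU, hmax⟩ := exists_maximal_of_wellFoundedGT
    (fun U : Finset V => U = ∅ ∨ Good G U) ⟨∅, Or.inl rfl⟩
  by_cases h : U = Finset.univ
  · rcases hU with h' | h'
    · exact absurd (h.symm.trans h') hne
    · exact h ▸ h'
  · obtain ⟨U', h1, h2⟩ := step G hconn hloc U hU h
    exact absurd (hmax (Or.inr h2) h1.1) h1.2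

theorem stmt_12 {V : Type*} [Fintype V] (G : SimpleGraph V) (n : ℕ)
    (hn : Fintype.card V = n) (h8 : 8 ≤ n)
    (hconn : G.Connected) (hloc : LocallyNonforesty G) :
    (if n % 4 = 0 ∨ n % 4 = 3 then 2 * n - 1 - n / 4 else 2 * n - n / 4)
      ≤ G.edgeSet.ncard := by
  have h := good_univ G hconn hloc
  have he : G.edgeSet.ncard = eIn G Finset.univ := by
    unfold eIn
    rw [← Set.ncard_coe_finset]
    congr 1
    ext s
    simp [mem_edgesIn]
  unfold Good at h
  rw [Finset.card_univ, hn, ← he] at h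
  split_ifs <;> omega
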